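/- arXiv:1908.03490 — 2 statements merged into one kernel-verified Lean document; each statement's English description precedes it below -/
import Mathlib

section
/- Let 0 < α < 1/2, ε > 0 and T > 0. Then there exists a constant C > 0, depending only on α, ε, T, such that for every n ∈ ℤ², every integer N ≥ 1, and every t ∈ [0, T], one has | ∑ ∫₀^t ∫₀^{t₁} (sin((t − t₁)⟨n⟩) sin((t − t₂)⟨n⟩) / ⟨n⟩²) · σ_{n₁}(t₁, t₂) · σ_{n₂}(t₁, t₂) dt₂ dt₁ | ≤ C ⟨n⟩^{−2 − 2 s_α + ε}, where the sum ranges over all pairs n₁, n₂ ∈ ℤ² with n₁ + n₂ = n, n₁ ≠ n₂, n₁ ≠ −n₂, |n₁| ≤ N and |n₂| ≤ N. In particular the bound is uniform in N. (This is the deterministic multilinear smoothing estimate underlying Proposition 1.1, exhibiting an extra gain of min(α, 1/4) derivatives for the second-order stochastic object of the wave equation.) -/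
/-!
For `σ_m = ⟨m⟩^{-2(1-α)} (cos((t₁ - t₂)⟨m⟩) t₂ / 2 + O(1/⟨m⟩))`, the main part of a summand is a
combination of integrals `∫ t₂² sin(φ - κ t₂) dt₂` over the four phases `κ = ⟨n⟩ ± ⟨m⟩ ± ⟨n - m⟩`.
Integrating by parts in `t₂` (`osc_bound`) gains a factor `1 / (1 + |κ|)`; the remainder gains
`1/⟨m⟩ + 1/⟨n - m⟩`. This gives `summand_bound`, and the oscillation is not used any further.

The phases are bounded below pointwise. With `X = n × m` the integer cross product, Lagrange's
identity gives `|κ| ≥ X² / (⟨n⟩⟨m⟩(⟨n⟩ + ⟨m⟩ + ⟨n - m⟩))` for all four signs, provided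
`⟨m⟩ ≤ ⟨n - m⟩` (`phase_lower`); the opposite ordering follows from the symmetry `m ↔ n - m`.

Writing `A = ⟨n⟩`, `r = ⟨m⟩` and `y = |X|/A ≤ r`, this bound gives
`1 / (1 + |κ|) ≲ (r (A + r) / A)^{1/2} / (1 + y)`, and a comparison of powers (`power_main`,
`power_rest`) bounds the whole multiplier by
`A^{-2 + 4α - 2 min(α, 1/4) + 2δ} r^{-1-δ} (1 + y)^{-1-δ}`.
Finally `y` is, up to constants, the absolute value of one coordinate of `m` after an integer shear
depending on `n` (`exists_shear`). A shear is a bijection of `ℤ²`, so the sum over `m` is at most a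
constant times the fixed convergent sum `∑ (1 + |a|)^{-1-δ} (1 + |b|)^{-1-δ}`, uniformly in `n`
and `N`. For `n = 0` the sum is empty.
-/

/-- Japanese bracket `⟨n⟩ = (1 + |n|²)^{1/2}` for `n ∈ ℤ²`. -/
noncomputable def jb2 (n : ℤ × ℤ) : ℝ :=
  Real.sqrt (1 + (n.1 : ℝ) ^ 2 + (n.2 : ℝ) ^ 2)

/-- Euclidean norm `|n|` for `n ∈ ℤ²`. -/
noncomputable def znorm2 (n : ℤ × ℤ) : ℝ :=
  Real.sqrt ((n.1 : ℝ) ^ 2 + (n.2 : ℝ) ^ 2)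

/-- `s_α = 1 - 2α + min(α, 1/4)`. -/
noncomputable def sA (α : ℝ) : ℝ := 1 - 2 * α + min α (1 / 4)

/-- The wave covariance function `σ_m(t₁, t₂)`. -/
noncomputable def sigmaW (α : ℝ) (m : ℤ × ℤ) (t₁ t₂ : ℝ) : ℝ :=
  Real.cos ((t₁ - t₂) * jb2 m) / (2 * jb2 m ^ (2 * (1 - α))) * t₂
    + Real.sin ((t₁ - t₂) * jb2 m) / (4 * jb2 m ^ (3 - 2 * α))
    - Real.sin ((t₁ + t₂) * jb2 m) / (4 * jb2 m ^ (3 - 2 * α))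

/-! ### Brackets, cross products and lower bounds for the phases -/

/-- The integer cross product `n × m`, as a real number. -/
noncomputable def cross2 (n m : ℤ × ℤ) : ℝ := (n.1 : ℝ) * m.2 - (n.2 : ℝ) * m.1

lemma jb2_sq (n : ℤ × ℤ) : jb2 n ^ 2 = 1 + (n.1 : ℝ) ^ 2 + (n.2 : ℝ) ^ 2 := by
  unfold jb2; exact Real.sq_sqrt (by positivity)

lemma one_le_jb2 (n : ℤ × ℤ) : 1 ≤ jb2 n := by
  unfold jb2
  rw [Real.one_le_sqrt]
  nlinarith [sq_nonneg (n.1 : ℝ), sq_nonneg (n.2 : ℝ)]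

lemma cross2_sub (n m : ℤ × ℤ) : cross2 n (n - m) = -cross2 n m := by
  simp only [cross2, Prod.fst_sub, Prod.snd_sub]; push_cast; ring

lemma cross2_sq_le (n m : ℤ × ℤ) : cross2 n m ^ 2 ≤ (jb2 n * jb2 m) ^ 2 := by
  rw [mul_pow, jb2_sq, jb2_sq]
  unfold cross2
  nlinarith [sq_nonneg ((n.1 : ℝ) * m.1 + n.2 * m.2), sq_nonneg (n.1 : ℝ), sq_nonneg (n.2 : ℝ),
    sq_nonneg (m.1 : ℝ), sq_nonneg (m.2 : ℝ)]

/-- Used with `D = ⟨x⟩⟨y⟩`, `E = -x · y` and `X = x × y`: it follows from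
`(D + E)(D - E) ≥ X²` and `D - E ≤ 2D`. -/
lemma sq_le_of_lagrange {D E X : ℝ} (hD : 0 < D) (h : E ^ 2 + X ^ 2 ≤ D ^ 2) :
    X ^ 2 ≤ (D + E) * (2 * D) := by
  have h1 : E ≤ D := abs_le_of_sq_le_sq' (by nlinarith [sq_nonneg X]) hD.le |>.2
  have h2 : -D ≤ E := abs_le_of_sq_le_sq' (by nlinarith [sq_nonneg X]) hD.le |>.1
  nlinarith

/-- `⟨x⟩ + ⟨y⟩ - ⟨x + y⟩` controls the square of the cross product: multiplied by
`⟨x⟩ + ⟨y⟩ + ⟨x + y⟩` it equals `1 + 2(⟨x⟩⟨y⟩ - x · y)`. -/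
lemma cross_le_phase (x y : ℤ × ℤ) :
    cross2 x y ^ 2 ≤ (jb2 x + jb2 y - jb2 (x + y)) *
      (jb2 x * jb2 y * (jb2 x + jb2 y + jb2 (x + y))) := by
  have hx := one_le_jb2 x
  have hy := one_le_jb2 y
  have hD : 0 < jb2 x * jb2 y := by positivity
  have h1 := sq_le_of_lagrange (D := jb2 x * jb2 y)
    (E := -((x.1 : ℝ) * y.1 + x.2 * y.2)) (X := cross2 x y) hD (by
      rw [mul_pow, jb2_sq, jb2_sq]
      unfold cross2
      nlinarith [sq_nonneg (x.1 : ℝ), sq_nonneg (x.2 : ℝ), sq_nonneg (y.1 : ℝ),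
        sq_nonneg (y.2 : ℝ)])
  have h2 : (jb2 x + jb2 y - jb2 (x + y)) * (jb2 x + jb2 y + jb2 (x + y))
      = 1 + 2 * (jb2 x * jb2 y + -((x.1 : ℝ) * y.1 + x.2 * y.2)) := by
    have e1 := jb2_sq x
    have e2 := jb2_sq y
    have e3 := jb2_sq (x + y)
    simp only [Prod.fst_add, Prod.snd_add] at e3
    push_cast at e3
    linear_combination e1 + e2 - e3
  calc cross2 x y ^ 2 ≤ _ := h1
    _ ≤ (1 + 2 * (jb2 x * jb2 y + -((x.1 : ℝ) * y.1 + x.2 * y.2))) * (jb2 x * jb2 y) := by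
      nlinarith
    _ = _ := by rw [← h2]; ring

lemma jb2_add_le (x y : ℤ × ℤ) : jb2 (x + y) ≤ jb2 x + jb2 y := by
  have h := cross_le_phase x y
  have hx := one_le_jb2 x
  have hy := one_le_jb2 y
  have hz := one_le_jb2 (x + y)
  have h0 := (sq_nonneg (cross2 x y)).trans h
  have := nonneg_of_mul_nonneg_left h0 (by positivity)
  linarith

lemma jb2_neg (x : ℤ × ℤ) : jb2 (-x) = jb2 x := by simp [jb2]

/-- Every one of the four phases `κ = ⟨n⟩ ± ⟨m⟩ ± ⟨n - m⟩` satisfies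
`|κ| ≥ (n × m)² / (⟨n⟩⟨m⟩(⟨n⟩ + ⟨m⟩ + ⟨n - m⟩))` when `⟨m⟩ ≤ ⟨n - m⟩`. -/
lemma phase_lower (n m : ℤ × ℤ) (h : jb2 m ≤ jb2 (n - m)) {κ : ℝ}
    (hκ : κ = jb2 n + jb2 m + jb2 (n - m) ∨ κ = jb2 n + jb2 m - jb2 (n - m) ∨
      κ = jb2 n - jb2 m + jb2 (n - m) ∨ κ = jb2 n - jb2 m - jb2 (n - m)) :
    cross2 n m ^ 2 ≤ |κ| * (jb2 n * jb2 m * (jb2 n + jb2 m + jb2 (n - m))) := by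
  have hA := one_le_jb2 n
  have h1 := one_le_jb2 m
  have h2 := one_le_jb2 (n - m)
  have ha := cross_le_phase n (-m)
  have hc := cross_le_phase m (n - m)
  have hX := cross2_sq_le n m
  have e1 : cross2 n (-m) = -cross2 n m := by simp [cross2]; ring
  have e2 : cross2 m (n - m) = -cross2 n m := by
    simp only [cross2, Prod.fst_sub, Prod.snd_sub]; push_cast; ring
  rw [e1, neg_sq, jb2_neg, ← sub_eq_add_neg] at ha
  rw [e2, neg_sq, add_sub_cancel] at hc
  set A := jb2 n
  set r := jb2 m
  set s := jb2 (n - m)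
  have hS : 0 < A * r * (A + r + s) := by positivity
  -- a phase that is at least `⟨n⟩` or at least `⟨m⟩` needs only `|n × m| ≤ ⟨n⟩⟨m⟩`
  have big : ∀ k : ℝ, (A ≤ k ∨ r ≤ k) → cross2 n m ^ 2 ≤ k * (A * r * (A + r + s)) := by
    intro k hk
    refine hX.trans ?_
    have : A * r ≤ k * (A + r + s) := by
      rcases hk with hk | hk
      · exact mul_le_mul hk (by linarith) (by linarith) (by linarith)
      · rw [mul_comm]; exact mul_le_mul hk (by linarith) (by linarith) (by linarith)
    calc (A * r) ^ 2 = (A * r) * (A * r) := by ring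
      _ ≤ (k * (A + r + s)) * (A * r) := by gcongr
      _ = _ := by ring
  rcases hκ with rfl | rfl | rfl | rfl
  · exact big _ (Or.inl (by rw [abs_of_nonneg] <;> linarith))
  · exact ha.trans (by gcongr; exact le_abs_self _)
  · exact big _ (Or.inl (le_abs.2 (Or.inl (by linarith))))
  · rcases le_total s A with hsA | hsA
    · have hk : 0 ≤ r + s - A := by
        have := (sq_nonneg (cross2 n m)).trans hc
        have := nonneg_of_mul_nonneg_left this (by positivity)
        linarith
      calc cross2 n m ^ 2 ≤ _ := hc
        _ ≤ (r + s - A) * (A * r * (A + r + s)) := by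
          apply mul_le_mul_of_nonneg_left _ hk
          have : r * s ≤ A * r := by nlinarith
          calc r * s * (r + s + A) ≤ A * r * (r + s + A) := by gcongr
            _ = _ := by ring
        _ ≤ _ := by gcongr; exact le_abs.2 (Or.inr (by linarith))
    · exact big _ (Or.inr (le_abs.2 (Or.inr (by linarith))))

/-! ### Shears and the summable majorant -/

/-- A shear of the lattice adapted to `n`: its second coordinate is, up to an error of size one
and a bounded factor, the distance of `m` to the line spanned by `n`. -/
lemma exists_shear (n : ℤ × ℤ) (hn : n ≠ 0) : ∃ φ : ℤ × ℤ ≃ ℤ × ℤ, ∀ m,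
    1 + |((φ m).1 : ℝ)| ≤ 2 * jb2 m ∧ 1 + |((φ m).2 : ℝ)| ≤ 2 * (1 + |cross2 n m| / jb2 n) := by
  have hA := one_le_jb2 n
  have hA2 := jb2_sq n
  have fst : ∀ m : ℤ × ℤ, 1 + |(m.1 : ℝ)| ≤ 2 * jb2 m ∧ 1 + |(m.2 : ℝ)| ≤ 2 * jb2 m := by
    intro m
    have h1 := jb2_sq m
    have h2 := one_le_jb2 m
    have h3 : |(m.1 : ℝ)| ≤ jb2 m := abs_le_of_sq_le_sq (by nlinarith [sq_nonneg (m.2 : ℝ)]) (by linarith)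
    have h4 : |(m.2 : ℝ)| ≤ jb2 m := abs_le_of_sq_le_sq (by nlinarith [sq_nonneg (m.1 : ℝ)]) (by linarith)
    constructor <;> linarith
  -- `p` is the coordinate of `n` of larger modulus, `X = ±(n × m)`, `m = (u, v)` up to order
  have key : ∀ (p q u v : ℤ) (X : ℝ), p ≠ 0 → |q| ≤ |p| → jb2 n ^ 2 = 1 + (p : ℝ) ^ 2 + (q : ℝ) ^ 2 →
      |X| = |(p : ℝ) * v - q * u| →
      1 + |((v - ⌊(q : ℝ) * u / p⌋ : ℤ) : ℝ)| ≤ 2 * (1 + |X| / jb2 n) := by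
    intro p q u v X hp hqp hj hX
    have hp' : (p : ℝ) ≠ 0 := by exact_mod_cast hp
    have hp1 : (1 : ℝ) ≤ |(p : ℝ)| := by exact_mod_cast Int.one_le_abs hp
    have hqp' : |(q : ℝ)| ≤ |(p : ℝ)| := by exact_mod_cast hqp
    have hq2 : (q : ℝ) ^ 2 ≤ (p : ℝ) ^ 2 := sq_le_sq.2 hqp'
    have hj2 : jb2 n ≤ 2 * |(p : ℝ)| := by
      apply abs_le_of_sq_le_sq' _ (by positivity) |>.2
      rw [mul_pow, sq_abs, hj]
      have : (1 : ℝ) ≤ (p : ℝ) ^ 2 := by rw [← sq_abs]; nlinarith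
      linarith
    set w : ℝ := v - (q : ℝ) * u / p with hw
    have hXw : |X| = |(p : ℝ)| * |w| := by
      rw [hX, ← abs_mul, hw]; congr 1; field_simp
    have hle : |w| / 2 ≤ |X| / jb2 n := by
      rw [hXw, div_le_div_iff₀ (by norm_num) (by linarith)]
      nlinarith [abs_nonneg w]
    have hf := Int.floor_le ((q : ℝ) * u / p)
    have hf2 := Int.lt_floor_add_one ((q : ℝ) * u / p)
    have : |((v - ⌊(q : ℝ) * u / p⌋ : ℤ) : ℝ)| ≤ |w| + 1 := by
      push_cast
      rw [abs_le]
      have h5 := neg_abs_le w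
      have h6 := le_abs_self w
      constructor <;> linarith
    linarith
  rcases le_total |n.2| |n.1| with h | h
  · refine ⟨Equiv.prodShear (Equiv.refl ℤ)
      (fun u => Equiv.subRight ⌊(n.2 : ℝ) * u / n.1⌋), fun m => ⟨(fst m).1, ?_⟩⟩
    refine key n.1 n.2 m.1 m.2 _ ?_ h hA2 rfl
    intro h0
    have h0' : n.2 = 0 := by simpa [h0] using h
    exact hn (Prod.ext h0 h0')
  · refine ⟨(Equiv.prodComm ℤ ℤ).trans (Equiv.prodShear (Equiv.refl ℤ)
      (fun u => Equiv.subRight ⌊(n.1 : ℝ) * u / n.2⌋)), fun m => ⟨(fst m).2, ?_⟩⟩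
    refine key n.2 n.1 m.2 m.1 _ ?_ h (by rw [hA2]; ring) ?_
    · intro h0
      have h0' : n.1 = 0 := by simpa [h0] using h
      exact hn (Prod.ext h0' h0)
    · rw [← abs_neg]; congr 1; unfold cross2; ring

lemma summable_majorant {b : ℝ} (hb : 1 < b) :
    Summable fun z : ℤ × ℤ => (1 + |(z.1 : ℝ)|) ^ (-b) * (1 + |(z.2 : ℝ)|) ^ (-b) := by
  have h1 : Summable fun k : ℕ => (1 + (k : ℝ)) ^ (-b) := by
    refine ((Real.summable_one_div_nat_add_rpow 1 b).2 hb).congr fun k => ?_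
    rw [Real.rpow_neg (by positivity), one_div, abs_of_nonneg (by positivity), add_comm]
  have h : Summable fun k : ℤ => (1 + |(k : ℝ)|) ^ (-b) :=
    Summable.of_nat_of_neg (by simpa using h1) (by simpa using h1)
  exact h.mul_of_nonneg h (fun k => by positivity) (fun k => by positivity)

/-! ### Oscillatory integrals -/

lemma abs_integral_le {f : ℝ → ℝ} {s C : ℝ} (hs : 0 ≤ s)
    (h : ∀ x, 0 < x → x ≤ s → |f x| ≤ C) : |∫ x in (0 : ℝ)..s, f x| ≤ C * s := by
  have := intervalIntegral.norm_integral_le_of_norm_le_const (a := 0) (b := s) (f := f) (C := C) (by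
    intro x hx
    rw [Set.uIoc_of_le hs] at hx
    exact h x hx.1 hx.2)
  rwa [sub_zero, abs_of_nonneg hs] at this

/-- For large `|κ|` the decay comes from integrating the derivative of `x² cos(φ - κ x)`; for small
`|κ|` the trivial bound suffices. -/
lemma osc_bound {T s : ℝ} (hs : 0 ≤ s) (hsT : s ≤ T) (φ κ : ℝ) :
    |∫ x in (0 : ℝ)..s, x ^ 2 * Real.sin (φ - κ * x)| ≤ (T ^ 3 + 3 * T ^ 2) / (1 + |κ|) := by
  set J := ∫ x in (0 : ℝ)..s, x ^ 2 * Real.sin (φ - κ * x) with hJ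
  have hT : 0 ≤ T := hs.trans hsT
  have b1 : |J| ≤ T ^ 2 * T := by
    refine (abs_integral_le (C := T ^ 2) hs ?_).trans ?_
    · intro x hx1 hx2
      rw [abs_mul, abs_of_nonneg (sq_nonneg x)]
      have := Real.abs_sin_le_one (φ - κ * x)
      have h2 : x ^ 2 ≤ T ^ 2 := by nlinarith [hx1, hx2]
      nlinarith [abs_nonneg (Real.sin (φ - κ * x)), sq_nonneg x]
    · gcongr
  have b2 : |κ| * |J| ≤ 3 * T ^ 2 := by
    have hd : ∫ x in (0 : ℝ)..s, (2 * x * Real.cos (φ - κ * x) + κ * (x ^ 2 * Real.sin (φ - κ * x)))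
        = s ^ 2 * Real.cos (φ - κ * s) - 0 ^ 2 * Real.cos (φ - κ * 0) := by
      apply intervalIntegral.integral_eq_sub_of_hasDerivAt
        (f := fun x => x ^ 2 * Real.cos (φ - κ * x))
      · intro x _
        have h1 : HasDerivAt (fun x : ℝ => φ - κ * x) (-κ) x := by
          simpa using ((hasDerivAt_id x).const_mul κ).const_sub φ
        have h2 := (hasDerivAt_pow 2 x).mul h1.cos
        refine h2.congr_deriv ?_
        norm_num
        ring
      · exact Continuous.intervalIntegrable (by fun_prop) _ _
    rw [intervalIntegral.integral_add (Continuous.intervalIntegrable (by fun_prop) _ _)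
      (Continuous.intervalIntegrable (by fun_prop) _ _), intervalIntegral.integral_const_mul,
      ← hJ] at hd
    have b3 : |∫ x in (0 : ℝ)..s, 2 * x * Real.cos (φ - κ * x)| ≤ 2 * T * T := by
      refine (abs_integral_le (C := 2 * T) hs ?_).trans ?_
      · intro x hx1 hx2
        rw [abs_mul, abs_of_nonneg (by linarith [hx1] : (0 : ℝ) ≤ 2 * x)]
        have := Real.abs_cos_le_one (φ - κ * x)
        nlinarith [abs_nonneg (Real.cos (φ - κ * x)), hx1, hx2]
      · gcongr
    have b4 : |s ^ 2 * Real.cos (φ - κ * s)| ≤ T ^ 2 := by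
      rw [abs_mul, abs_of_nonneg (sq_nonneg s)]
      have := Real.abs_cos_le_one (φ - κ * s)
      have h2 : s ^ 2 ≤ T ^ 2 := by nlinarith
      nlinarith [abs_nonneg (Real.cos (φ - κ * s)), sq_nonneg s]
    rw [← abs_mul]
    have e : κ * J = s ^ 2 * Real.cos (φ - κ * s)
        - ∫ x in (0 : ℝ)..s, 2 * x * Real.cos (φ - κ * x) := by linarith
    rw [e]
    refine (abs_sub _ _).trans ?_
    linarith
  rw [le_div_iff₀ (by positivity)]
  linarith

/-- The sum of `1 / (1 + |κ|)` over the four phases `κ = A ± r ± s`. -/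
noncomputable def phaseSum (A r s : ℝ) : ℝ :=
  1 / (1 + |A + r + s|) + 1 / (1 + |A + r - s|) + 1 / (1 + |A - r + s|) + 1 / (1 + |A - r - s|)

lemma sin_cos_cos (a b c : ℝ) : Real.sin a * Real.cos b * Real.cos c =
    (Real.sin (a + b + c) + Real.sin (a + b - c) + Real.sin (a - b + c)
      + Real.sin (a - b - c)) / 4 := by
  simp only [Real.sin_add, Real.sin_sub, Real.cos_add, Real.cos_sub]
  ring

/-- The oscillatory integral in the variable `t₂`, with the size of the brackets factored out. -/
lemma inner_bound {T s t A r₁ r₂ : ℝ} (hs : 0 ≤ s) (hsT : s ≤ T) (h1 : 1 ≤ r₁) (h2 : 1 ≤ r₂) :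
    |∫ x in (0 : ℝ)..s, Real.sin ((t - x) * A) *
      ((Real.cos ((s - x) * r₁) / 2 * x +
          (Real.sin ((s - x) * r₁) - Real.sin ((s + x) * r₁)) / (4 * r₁)) *
       (Real.cos ((s - x) * r₂) / 2 * x +
          (Real.sin ((s - x) * r₂) - Real.sin ((s + x) * r₂)) / (4 * r₂)))|
      ≤ (T + 1) ^ 3 * 4 * (phaseSum A r₁ r₂ + (1 / r₁ + 1 / r₂)) := by
  have hT : 0 ≤ T := hs.trans hsT
  set g : ℝ → ℝ → ℝ := fun r x => (Real.sin ((s - x) * r) - Real.sin ((s + x) * r)) / (4 * r) with hg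
  have gb : ∀ r x, 1 ≤ r → |g r x| ≤ 1 / 2 * (1 / r) := by
    intro r x hr
    have e : 1 / 2 * (1 / r) = 2 / (4 * r) := by field_simp; norm_num
    rw [hg, abs_div, abs_of_pos (by positivity : 0 < 4 * r), e]
    gcongr
    refine (abs_sub _ _).trans ?_
    linarith [Real.abs_sin_le_one ((s - x) * r), Real.abs_sin_le_one ((s + x) * r)]
  have gc : ∀ r, Continuous (g r) := fun r => by rw [hg]; fun_prop
  set R : ℝ → ℝ := fun x => Real.sin ((t - x) * A) *
    (Real.cos ((s - x) * r₁) / 2 * x * g r₂ x + Real.cos ((s - x) * r₂) / 2 * x * g r₁ x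
      + g r₁ x * g r₂ x) with hR
  have Rc : Continuous R := by
    have := gc r₁
    have := gc r₂
    rw [hR]; fun_prop
  have Rb : |∫ x in (0 : ℝ)..s, R x| ≤ (T + 1) * (1 / r₁ + 1 / r₂) * T := by
    refine (abs_integral_le hs
      (C := (T + 1) * (1 / r₁ + 1 / r₂)) ?_).trans ?_
    · intro x hx1 hx2
      have hx0 : 0 ≤ x := hx1.le
      have hxT : x ≤ T := hx2.trans hsT
      have cb : ∀ r, |Real.cos ((s - x) * r) / 2 * x| ≤ 1 / 2 * T := by
        intro r
        rw [abs_mul, abs_div, abs_of_nonneg hx0, abs_two]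
        have := Real.abs_cos_le_one ((s - x) * r)
        gcongr
      have hr2 : 1 / r₂ ≤ 1 := by rw [div_le_one (by linarith)]; exact h2
      have p1 : (0 : ℝ) ≤ 1 / r₁ := by positivity
      have p2 : (0 : ℝ) ≤ 1 / r₂ := by positivity
      rw [hR, abs_mul]
      calc _ ≤ 1 * (1 / 2 * T * (1 / 2 * (1 / r₂)) + 1 / 2 * T * (1 / 2 * (1 / r₁))
              + 1 / 2 * (1 / r₁) * (1 / 2 * (1 / r₂))) := by
            have z1 := gb r₁ x h1
            have z2 := gb r₂ x h2
            gcongr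
            · exact Real.abs_sin_le_one _
            · refine (abs_add_le _ _).trans (add_le_add ((abs_add_le _ _).trans (add_le_add ?_ ?_)) ?_)
              · rw [abs_mul]; exact mul_le_mul (cb _) z2 (abs_nonneg _) (by positivity)
              · rw [abs_mul]; exact mul_le_mul (cb _) z1 (abs_nonneg _) (by positivity)
              · rw [abs_mul]; exact mul_le_mul z1 z2 (abs_nonneg _) (by positivity)
        _ ≤ _ := by nlinarith [mul_nonneg p1 (sub_nonneg.2 hr2), mul_nonneg hT p1, mul_nonneg hT p2]
    · gcongr
  set f : ℝ → ℝ → ℝ → ℝ := fun φ κ x => x ^ 2 * Real.sin (φ - κ * x) with hf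
  have fc : ∀ φ κ, IntervalIntegrable (f φ κ) MeasureTheory.volume 0 s := fun φ κ =>
    Continuous.intervalIntegrable (by rw [hf]; fun_prop) _ _
  have split : ∀ x, Real.sin ((t - x) * A) *
      ((Real.cos ((s - x) * r₁) / 2 * x + g r₁ x) * (Real.cos ((s - x) * r₂) / 2 * x + g r₂ x))
      = 1 / 16 * (f (t * A + s * r₁ + s * r₂) (A + r₁ + r₂) x
        + f (t * A + s * r₁ - s * r₂) (A + r₁ - r₂) x
        + f (t * A - s * r₁ + s * r₂) (A - r₁ + r₂) x
        + f (t * A - s * r₁ - s * r₂) (A - r₁ - r₂) x) + R x := by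
    intro x
    have h := sin_cos_cos ((t - x) * A) ((s - x) * r₁) ((s - x) * r₂)
    have e1 : (t - x) * A + (s - x) * r₁ + (s - x) * r₂
      = t * A + s * r₁ + s * r₂ - (A + r₁ + r₂) * x := by ring
    have e2 : (t - x) * A + (s - x) * r₁ - (s - x) * r₂
      = t * A + s * r₁ - s * r₂ - (A + r₁ - r₂) * x := by ring
    have e3 : (t - x) * A - (s - x) * r₁ + (s - x) * r₂
      = t * A - s * r₁ + s * r₂ - (A - r₁ + r₂) * x := by ring
    have e4 : (t - x) * A - (s - x) * r₁ - (s - x) * r₂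
      = t * A - s * r₁ - s * r₂ - (A - r₁ - r₂) * x := by ring
    rw [e1, e2, e3, e4] at h
    simp only [hf, hR]
    linear_combination (x ^ 2 / 4) * h
  have hint : (∫ x in (0 : ℝ)..s, Real.sin ((t - x) * A) *
      ((Real.cos ((s - x) * r₁) / 2 * x + g r₁ x) * (Real.cos ((s - x) * r₂) / 2 * x + g r₂ x)))
      = 1 / 16 * ((∫ x in (0 : ℝ)..s, f (t * A + s * r₁ + s * r₂) (A + r₁ + r₂) x)
        + (∫ x in (0 : ℝ)..s, f (t * A + s * r₁ - s * r₂) (A + r₁ - r₂) x)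
        + (∫ x in (0 : ℝ)..s, f (t * A - s * r₁ + s * r₂) (A - r₁ + r₂) x)
        + (∫ x in (0 : ℝ)..s, f (t * A - s * r₁ - s * r₂) (A - r₁ - r₂) x))
        + ∫ x in (0 : ℝ)..s, R x := by
    simp_rw [split]
    rw [intervalIntegral.integral_add
        (((((fc _ _).add (fc _ _)).add (fc _ _)).add (fc _ _)).const_mul _)
        (Rc.intervalIntegrable _ _), intervalIntegral.integral_const_mul,
      intervalIntegral.integral_add (((fc _ _).add (fc _ _)).add (fc _ _)) (fc _ _),
      intervalIntegral.integral_add ((fc _ _).add (fc _ _)) (fc _ _),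
      intervalIntegral.integral_add (fc _ _) (fc _ _)]
  rw [hint]
  have o := fun φ κ => osc_bound hs hsT φ κ
  have key : |_| ≤ _ := (abs_add_le (1 / 16 *
      ((∫ x in (0 : ℝ)..s, f (t * A + s * r₁ + s * r₂) (A + r₁ + r₂) x)
        + (∫ x in (0 : ℝ)..s, f (t * A + s * r₁ - s * r₂) (A + r₁ - r₂) x)
        + (∫ x in (0 : ℝ)..s, f (t * A - s * r₁ + s * r₂) (A - r₁ + r₂) x)
        + (∫ x in (0 : ℝ)..s, f (t * A - s * r₁ - s * r₂) (A - r₁ - r₂) x)))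
        (∫ x in (0 : ℝ)..s, R x))
  refine key.trans ?_
  have m4 : ∀ a b c d a' b' c' d' : ℝ, |a| ≤ a' → |b| ≤ b' → |c| ≤ c' → |d| ≤ d' →
      |1 / 16 * (a + b + c + d)| ≤ 1 / 16 * (a' + b' + c' + d') := by
    intro a b c d a' b' c' d' ha hb hc hd
    rw [abs_le] at *
    constructor <;> linarith [ha.1, ha.2, hb.1, hb.2, hc.1, hc.2, hd.1, hd.2]
  have M := m4 _ _ _ _ _ _ _ _ (o (t * A + s * r₁ + s * r₂) (A + r₁ + r₂))
    (o (t * A + s * r₁ - s * r₂) (A + r₁ - r₂)) (o (t * A - s * r₁ + s * r₂) (A - r₁ + r₂))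
    (o (t * A - s * r₁ - s * r₂) (A - r₁ - r₂))
  have e : ∀ a b c d k : ℝ, 1 / 16 * (k / a + k / b + k / c + k / d)
      = 1 / 16 * k * (1 / a + 1 / b + 1 / c + 1 / d) := by intros; ring
  rw [e] at M
  refine (add_le_add M Rb).trans ?_
  change _ * phaseSum A r₁ r₂ + _ ≤ _
  have hP : 0 ≤ phaseSum A r₁ r₂ := by unfold phaseSum; positivity
  have hQ : 0 ≤ 1 / r₁ + 1 / r₂ := by positivity
  have c1 : 1 / 16 * (T ^ 3 + 3 * T ^ 2) ≤ (T + 1) ^ 3 * 4 := by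
    nlinarith [pow_nonneg hT 3, pow_nonneg hT 2]
  have c2 : (T + 1) * T ≤ (T + 1) ^ 3 * 4 := by nlinarith [pow_nonneg hT 3, pow_nonneg hT 2]
  calc _ = 1 / 16 * (T ^ 3 + 3 * T ^ 2) * phaseSum A r₁ r₂ + (T + 1) * T * (1 / r₁ + 1 / r₂) := by
        ring
    _ ≤ (T + 1) ^ 3 * 4 * phaseSum A r₁ r₂ + (T + 1) ^ 3 * 4 * (1 / r₁ + 1 / r₂) := by gcongr
    _ = _ := by ring

lemma sigmaW_factor (α : ℝ) (m : ℤ × ℤ) (s x : ℝ) :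
    sigmaW α m s x = jb2 m ^ (-(2 * (1 - α))) * (Real.cos ((s - x) * jb2 m) / 2 * x +
      (Real.sin ((s - x) * jb2 m) - Real.sin ((s + x) * jb2 m)) / (4 * jb2 m)) := by
  have h := one_le_jb2 m
  have h0 : 0 < jb2 m := by linarith
  have e : jb2 m ^ (3 - 2 * α) = jb2 m ^ (2 * (1 - α)) * jb2 m := by
    rw [← Real.rpow_add_one h0.ne']; congr 1; ring
  have hp : 0 < jb2 m ^ (2 * (1 - α)) := Real.rpow_pos_of_pos h0 _
  rw [sigmaW, e, Real.rpow_neg h0.le]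
  field_simp
  ring

/-- Bound of a single summand by brackets and phases. -/
lemma summand_bound {α T t : ℝ} (ht : 0 ≤ t) (htT : t ≤ T) (n m m' : ℤ × ℤ) :
    |∫ t₁ in (0 : ℝ)..t, ∫ t₂ in (0 : ℝ)..t₁,
      Real.sin ((t - t₁) * jb2 n) * Real.sin ((t - t₂) * jb2 n) / jb2 n ^ 2
        * (sigmaW α m t₁ t₂ * sigmaW α m' t₁ t₂)|
    ≤ (T + 1) ^ 4 * 4 * (jb2 n ^ 2)⁻¹ * (jb2 m ^ (-(2 * (1 - α))) * jb2 m' ^ (-(2 * (1 - α)))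
        * (phaseSum (jb2 n) (jb2 m) (jb2 m') + (1 / jb2 m + 1 / jb2 m'))) := by
  have hT : 0 ≤ T := ht.trans htT
  have hA := one_le_jb2 n
  have h1 := one_le_jb2 m
  have h2 := one_le_jb2 m'
  set Q := phaseSum (jb2 n) (jb2 m) (jb2 m') + (1 / jb2 m + 1 / jb2 m') with hQ
  have hQ0 : 0 ≤ Q := by rw [hQ]; unfold phaseSum; positivity
  set P := jb2 m ^ (-(2 * (1 - α))) * jb2 m' ^ (-(2 * (1 - α))) with hP
  have hP0 : 0 ≤ P := by positivity
  refine (abs_integral_le ht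
    (C := (jb2 n ^ 2)⁻¹ * P * ((T + 1) ^ 3 * 4 * Q)) ?_).trans ?_
  · intro s hs1 hs2
    have hs0 : 0 ≤ s := hs1.le
    have hsT : s ≤ T := hs2.trans htT
    have e : ∀ x, Real.sin ((t - s) * jb2 n) * Real.sin ((t - x) * jb2 n) / jb2 n ^ 2
        * (sigmaW α m s x * sigmaW α m' s x) = (Real.sin ((t - s) * jb2 n) * ((jb2 n ^ 2)⁻¹ * P)) *
        (Real.sin ((t - x) * jb2 n) *
      ((Real.cos ((s - x) * jb2 m) / 2 * x +
          (Real.sin ((s - x) * jb2 m) - Real.sin ((s + x) * jb2 m)) / (4 * jb2 m)) *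
       (Real.cos ((s - x) * jb2 m') / 2 * x +
          (Real.sin ((s - x) * jb2 m') - Real.sin ((s + x) * jb2 m')) / (4 * jb2 m')))) := by
      intro x
      rw [sigmaW_factor, sigmaW_factor, hP]
      ring
    simp_rw [e]
    rw [intervalIntegral.integral_const_mul, abs_mul, abs_mul,
      abs_of_nonneg (by positivity : 0 ≤ (jb2 n ^ 2)⁻¹ * P)]
    have hi := inner_bound (t := t) (A := jb2 n) hs0 hsT h1 h2
    calc _ ≤ 1 * ((jb2 n ^ 2)⁻¹ * P) * ((T + 1) ^ 3 * 4 * Q) := by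
          gcongr
          exact Real.abs_sin_le_one _
      _ = _ := by ring
  · calc _ ≤ (jb2 n ^ 2)⁻¹ * P * ((T + 1) ^ 3 * 4 * Q) * (T + 1) := by gcongr; linarith
      _ = _ := by ring

/-! ### Bounds for the multiplier -/

/-- Pointwise comparison with the summable majorant, main term. Here `A = ⟨n⟩`, `r, s` are the
brackets of the two summed frequencies, `κ` is a phase and `y = |n × m| / ⟨n⟩`. -/
lemma power_main {α δ A r s y κ : ℝ} (hα0 : 0 < α) (hδ : 0 < δ)
    (hδα : 2 * δ ≤ 1 - 2 * α) (hA : 1 ≤ A) (hr : 1 ≤ r) (hrs : r ≤ s) (hAs : A ≤ r + s)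
    (hy : 0 ≤ y) (hyr : y ≤ r) (hκ : 0 ≤ κ) (h : y ^ 2 * A ≤ κ * (2 * r * (A + r))) :
    r ^ (-(2 * (1 - α))) * s ^ (-(2 * (1 - α))) * (1 / (1 + κ)) ≤
      36 * A ^ (-2 + 4 * α - 2 * min α (1 / 4) + 2 * δ) *
        (r ^ (-(1 + δ)) * (1 + y) ^ (-(1 + δ))) := by
  have hA0 : 0 < A := by linarith
  have hr0 : 0 < r := by linarith
  have hs0 : 0 < s := by linarith
  set B := A + r with hB
  have hB0 : 0 < B := by linarith
  have k1 : 1 / (1 + κ) ≤ 2 * (r ^ (1 / 2 : ℝ) * B ^ (1 / 2 : ℝ) * A ^ (-(1 / 2) : ℝ)) * (1 + y)⁻¹ := by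
    have e : r ^ (1 / 2 : ℝ) * B ^ (1 / 2 : ℝ) * A ^ (-(1 / 2) : ℝ) = √(r * B / A) := by
      rw [Real.sqrt_eq_rpow, Real.div_rpow (by positivity) hA0.le, Real.mul_rpow hr0.le hB0.le,
        Real.rpow_neg hA0.le]
      rfl
    have hZ : 0 < r * B / A := by positivity
    rw [e, ← div_eq_mul_inv, div_le_div_iff₀ (by linarith) (by linarith), one_mul]
    apply abs_le_of_sq_le_sq' _ (by positivity) |>.2
    rw [mul_pow, mul_pow, Real.sq_sqrt hZ.le]
    have z1 : 1 ≤ r * B / A := by rw [le_div_iff₀ hA0]; nlinarith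
    have z2 : y ^ 2 ≤ 2 * κ * (r * B / A) := by
      rw [← mul_div_assoc, le_div_iff₀ hA0]; linarith
    have z3 : 0 ≤ κ * (r * B / A) := by positivity
    nlinarith [sq_nonneg (y - 1), mul_nonneg hκ z3]
  have k2 : s ^ (-(2 * (1 - α))) ≤ 9 * B ^ (-(2 * (1 - α))) := by
    have z1 : s ^ (-(2 * (1 - α))) ≤ (B / 3) ^ (-(2 * (1 - α))) :=
      Real.rpow_le_rpow_of_nonpos (by positivity) (by linarith) (by linarith)
    rw [Real.div_rpow hB0.le (by norm_num), Real.rpow_neg (by norm_num : (0 : ℝ) ≤ 3),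
      div_inv_eq_mul] at z1
    have z2 : (3 : ℝ) ^ (2 * (1 - α)) ≤ 9 := by
      calc (3 : ℝ) ^ (2 * (1 - α)) ≤ 3 ^ (2 : ℝ) :=
            Real.rpow_le_rpow_of_exponent_le (by norm_num) (by linarith)
        _ = 9 := by norm_num
    calc _ ≤ _ := z1
      _ ≤ B ^ (-(2 * (1 - α))) * 9 := by gcongr
      _ = _ := by ring
  have k3 : (1 + y)⁻¹ ≤ 2 * r ^ δ * (1 + y) ^ (-(1 + δ)) := by
    have e : (1 + y)⁻¹ = (1 + y) ^ δ * (1 + y) ^ (-(1 + δ)) := by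
      rw [← Real.rpow_add (by linarith), ← Real.rpow_neg_one]; congr 1; ring
    rw [e]
    gcongr
    calc (1 + y) ^ δ ≤ (2 * r) ^ δ := Real.rpow_le_rpow (by linarith) (by linarith) hδ.le
      _ = 2 ^ δ * r ^ δ := Real.mul_rpow (by norm_num) hr0.le
      _ ≤ 2 ^ (1 : ℝ) * r ^ δ := by
        gcongr
        · norm_num
        · linarith
      _ = _ := by norm_num
  have k4 : r ^ (-(2 * (1 - α))) * B ^ (-(2 * (1 - α))) *
      (r ^ (1 / 2 : ℝ) * B ^ (1 / 2 : ℝ) * A ^ (-(1 / 2) : ℝ)) * r ^ δ ≤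
      A ^ (-2 + 4 * α - 2 * min α (1 / 4) + 2 * δ) * r ^ (-(1 + δ)) := by
    have la : 0 ≤ Real.log A := Real.log_nonneg hA
    have lr : 0 ≤ Real.log r := Real.log_nonneg hr
    have lab : Real.log A ≤ Real.log B := Real.log_le_log hA0 (by linarith)
    have lrb : Real.log r ≤ Real.log B := Real.log_le_log hr0 (by linarith)
    simp only [Real.rpow_def_of_pos hA0, Real.rpow_def_of_pos hr0, Real.rpow_def_of_pos hB0,
      ← Real.exp_add]
    rw [Real.exp_le_exp]
    set a := Real.log A
    set b := Real.log B
    set l := Real.log r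
    have m1 : min α (1 / 4) ≤ α := min_le_left _ _
    have m2 : min α (1 / 4) ≤ 1 / 4 := min_le_right _ _
    have m3 : 4 * α - 2 * min α (1 / 4) - 3 / 2 + 2 * δ ≤ 0 := by
      rcases min_choice α (1 / 4) with h | h <;> rw [h] <;> rw [h] at m1 m2 <;> linarith
    set μ := min α (1 / 4)
    have t1 : (2 * α - 1 / 2 + 2 * δ) * l ≤ (2 * α - 2 * μ + 2 * δ) * b := by
      calc _ ≤ (2 * α - 2 * μ + 2 * δ) * l := by gcongr; linarith
        _ ≤ _ := by apply mul_le_mul_of_nonneg_left lrb; linarith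
    have t2 : (4 * α - 2 * μ - 3 / 2 + 2 * δ) * (b - a) ≤ 0 :=
      mul_nonpos_of_nonpos_of_nonneg m3 (by linarith)
    linarith
  calc _ ≤ r ^ (-(2 * (1 - α))) * (9 * B ^ (-(2 * (1 - α)))) *
      (2 * (r ^ (1 / 2 : ℝ) * B ^ (1 / 2 : ℝ) * A ^ (-(1 / 2) : ℝ)) *
        (2 * r ^ δ * (1 + y) ^ (-(1 + δ)))) := by
        gcongr
        exact k1.trans (by gcongr)
    _ = 36 * (r ^ (-(2 * (1 - α))) * B ^ (-(2 * (1 - α))) *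
      (r ^ (1 / 2 : ℝ) * B ^ (1 / 2 : ℝ) * A ^ (-(1 / 2) : ℝ)) * r ^ δ) * (1 + y) ^ (-(1 + δ)) := by
        ring
    _ ≤ 36 * (A ^ (-2 + 4 * α - 2 * min α (1 / 4) + 2 * δ) * r ^ (-(1 + δ)))
        * (1 + y) ^ (-(1 + δ)) := by gcongr
    _ = _ := by ring

/-- Pointwise comparison with the summable majorant, lower-order terms of the covariances. -/
lemma power_rest {α δ A r s y : ℝ} (hα0 : 0 < α) (hδ : 0 < δ)
    (hδα : 2 * δ ≤ 1 - 2 * α) (hA : 1 ≤ A) (hr : 1 ≤ r) (hrs : r ≤ s) (hAs : A ≤ r + s)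
    (hy : 0 ≤ y) (hyr : y ≤ r) :
    r ^ (-(2 * (1 - α))) * s ^ (-(2 * (1 - α))) * (1 / r + 1 / s) ≤
      32 * A ^ (-2 + 4 * α - 2 * min α (1 / 4) + 2 * δ) *
        (r ^ (-(1 + δ)) * (1 + y) ^ (-(1 + δ))) := by
  have hA0 : 0 < A := by linarith
  have hr0 : 0 < r := by linarith
  have hs0 : 0 < s := by linarith
  have k1 : 1 / r + 1 / s ≤ 2 * r ^ (-1 : ℝ) := by
    have : 1 / s ≤ 1 / r := by gcongr
    rw [Real.rpow_neg_one, ← one_div]; linarith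
  have k2 : s ^ (-(2 * (1 - α))) ≤ 4 * A ^ (-(2 * (1 - α))) := by
    have z1 : s ^ (-(2 * (1 - α))) ≤ (A / 2) ^ (-(2 * (1 - α))) :=
      Real.rpow_le_rpow_of_nonpos (by positivity) (by linarith) (by linarith)
    rw [Real.div_rpow hA0.le (by norm_num), Real.rpow_neg (by norm_num : (0 : ℝ) ≤ 2),
      div_inv_eq_mul] at z1
    have z2 : (2 : ℝ) ^ (2 * (1 - α)) ≤ 4 := by
      calc (2 : ℝ) ^ (2 * (1 - α)) ≤ 2 ^ (2 : ℝ) :=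
            Real.rpow_le_rpow_of_exponent_le (by norm_num) (by linarith)
        _ = 4 := by norm_num
    calc _ ≤ _ := z1
      _ ≤ A ^ (-(2 * (1 - α))) * 4 := by gcongr
      _ = _ := by ring
  have k3 : r ^ (-(1 + δ)) ≤ 4 * (1 + y) ^ (-(1 + δ)) := by
    have z1 : (2 * r) ^ (-(1 + δ)) ≤ (1 + y) ^ (-(1 + δ)) :=
      Real.rpow_le_rpow_of_nonpos (by linarith) (by linarith) (by linarith)
    rw [Real.mul_rpow (by norm_num) hr0.le, Real.rpow_neg (by norm_num : (0 : ℝ) ≤ 2)] at z1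
    have z2 : (2 : ℝ) ^ (1 + δ) ≤ 4 := by
      calc (2 : ℝ) ^ (1 + δ) ≤ 2 ^ (2 : ℝ) :=
            Real.rpow_le_rpow_of_exponent_le (by norm_num) (by linarith)
        _ = 4 := by norm_num
    rw [inv_mul_le_iff₀ (by positivity)] at z1
    exact z1.trans (by gcongr)
  have k4 : r ^ (-(2 * (1 - α))) * A ^ (-(2 * (1 - α))) * r ^ (-1 : ℝ) ≤
      A ^ (-2 + 4 * α - 2 * min α (1 / 4) + 2 * δ) * (r ^ (-(1 + δ)) * r ^ (-(1 + δ))) := by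
    have la : 0 ≤ Real.log A := Real.log_nonneg hA
    have lr : 0 ≤ Real.log r := Real.log_nonneg hr
    simp only [Real.rpow_def_of_pos hA0, Real.rpow_def_of_pos hr0, ← Real.exp_add]
    rw [Real.exp_le_exp]
    have m1 : min α (1 / 4) ≤ α := min_le_left _ _
    have t1 : 0 ≤ (2 * α - 2 * min α (1 / 4) + 2 * δ) * Real.log A :=
      mul_nonneg (by linarith) la
    have t2 : 0 ≤ (1 - 2 * α - 2 * δ) * Real.log r := mul_nonneg (by linarith) lr
    linarith
  calc _ ≤ r ^ (-(2 * (1 - α))) * (4 * A ^ (-(2 * (1 - α)))) * (2 * r ^ (-1 : ℝ)) := by gcongr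
    _ = 8 * (r ^ (-(2 * (1 - α))) * A ^ (-(2 * (1 - α))) * r ^ (-1 : ℝ)) := by ring
    _ ≤ 8 * (A ^ (-2 + 4 * α - 2 * min α (1 / 4) + 2 * δ) *
        (r ^ (-(1 + δ)) * (4 * (1 + y) ^ (-(1 + δ))))) := by
        refine (mul_le_mul_of_nonneg_left k4 (by norm_num)).trans ?_
        gcongr
    _ = _ := by ring

/-- The summable majorant on `ℤ²`. -/
noncomputable def majorant (δ : ℝ) (z : ℤ × ℤ) : ℝ :=
  (1 + |(z.1 : ℝ)|) ^ (-(1 + δ)) * (1 + |(z.2 : ℝ)|) ^ (-(1 + δ))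

/-- Multiplier bound when `m` carries the smaller of the two brackets. -/
lemma multiplier_bound {α δ : ℝ} (hα0 : 0 < α) (hδ : 0 < δ)
    (hδα : 2 * δ ≤ 1 - 2 * α) (n m : ℤ × ℤ) (h : jb2 m ≤ jb2 (n - m)) {φ : ℤ × ℤ ≃ ℤ × ℤ}
    (hφ : ∀ m, 1 + |((φ m).1 : ℝ)| ≤ 2 * jb2 m ∧
      1 + |((φ m).2 : ℝ)| ≤ 2 * (1 + |cross2 n m| / jb2 n)) :
    jb2 m ^ (-(2 * (1 - α))) * jb2 (n - m) ^ (-(2 * (1 - α))) *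
      (phaseSum (jb2 n) (jb2 m) (jb2 (n - m)) + (1 / jb2 m + 1 / jb2 (n - m))) ≤
      2816 * jb2 n ^ (-2 + 4 * α - 2 * min α (1 / 4) + 2 * δ) * majorant δ (φ m) := by
  have hA := one_le_jb2 n
  have h1 := one_le_jb2 m
  have h2 := one_le_jb2 (n - m)
  have tri1 : jb2 n ≤ jb2 m + jb2 (n - m) := by
    simpa using jb2_add_le m (n - m)
  have tri2 : jb2 (n - m) ≤ jb2 n + jb2 m := by
    simpa [← sub_eq_add_neg, jb2_neg] using jb2_add_le n (-m)
  have hX := cross2_sq_le n m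
  have hlow := fun κ => phase_lower n m h (κ := κ)
  obtain ⟨hx1, hx2⟩ := hφ m
  set A := jb2 n
  set r := jb2 m
  set s := jb2 (n - m)
  set y := |cross2 n m| / A with hy
  have hA0 : 0 < A := by linarith
  have hr0 : 0 < r := by linarith
  have hs0 : 0 < s := by linarith
  have hy0 : 0 ≤ y := by positivity
  have hyr : y ≤ r := by
    rw [hy, div_le_iff₀ hA0, mul_comm]
    exact abs_le_of_sq_le_sq hX (by positivity)
  have main : ∀ κ, (κ = A + r + s ∨ κ = A + r - s ∨ κ = A - r + s ∨ κ = A - r - s) →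
      r ^ (-(2 * (1 - α))) * s ^ (-(2 * (1 - α))) * (1 / (1 + |κ|)) ≤
      36 * A ^ (-2 + 4 * α - 2 * min α (1 / 4) + 2 * δ) *
        (r ^ (-(1 + δ)) * (1 + y) ^ (-(1 + δ))) := by
    intro κ hκ
    apply power_main hα0 hδ hδα hA h1 h tri1 hy0 hyr (abs_nonneg κ)
    have hl := hlow κ hκ
    have e : y ^ 2 * A = cross2 n m ^ 2 / A := by
      rw [hy, div_pow, sq_abs]; field_simp
    rw [e, div_le_iff₀ hA0]
    refine hl.trans ?_
    calc |κ| * (A * r * (A + r + s)) ≤ |κ| * (A * r * (2 * (A + r))) := by gcongr; linarith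
      _ = _ := by ring
  have rest := power_rest hα0 hδ hδα hA h1 h tri1 hy0 hyr
  have M1 := main _ (Or.inl rfl)
  have M2 := main _ (Or.inr (Or.inl rfl))
  have M3 := main _ (Or.inr (Or.inr (Or.inl rfl)))
  have M4 := main _ (Or.inr (Or.inr (Or.inr rfl)))
  have tot : r ^ (-(2 * (1 - α))) * s ^ (-(2 * (1 - α))) * (phaseSum A r s + (1 / r + 1 / s)) ≤
      176 * A ^ (-2 + 4 * α - 2 * min α (1 / 4) + 2 * δ) *
        (r ^ (-(1 + δ)) * (1 + y) ^ (-(1 + δ))) := by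
    unfold phaseSum
    linarith
  have conv : ∀ a z : ℝ, 1 ≤ z → 1 ≤ a → z ≤ 2 * a → a ^ (-(1 + δ)) ≤ 4 * z ^ (-(1 + δ)) := by
    intro a z hz ha hza
    have z1 : (2 * a) ^ (-(1 + δ)) ≤ z ^ (-(1 + δ)) :=
      Real.rpow_le_rpow_of_nonpos (by linarith) hza (by linarith)
    rw [Real.mul_rpow (by norm_num) (by linarith), Real.rpow_neg (by norm_num : (0 : ℝ) ≤ 2)] at z1
    have z2 : (2 : ℝ) ^ (1 + δ) ≤ 4 := by
      calc (2 : ℝ) ^ (1 + δ) ≤ 2 ^ (2 : ℝ) :=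
            Real.rpow_le_rpow_of_exponent_le (by norm_num) (by linarith)
        _ = 4 := by norm_num
    rw [inv_mul_le_iff₀ (by positivity)] at z1
    exact z1.trans (by gcongr)
  have c1 := conv r _ (by linarith [abs_nonneg ((φ m).1 : ℝ)]) h1 hx1
  have c2 := conv (1 + y) _ (by linarith [abs_nonneg ((φ m).2 : ℝ)]) (by linarith) hx2
  calc _ ≤ _ := tot
    _ ≤ 176 * A ^ (-2 + 4 * α - 2 * min α (1 / 4) + 2 * δ) *
      ((4 * (1 + |((φ m).1 : ℝ)|) ^ (-(1 + δ))) * (4 * (1 + |((φ m).2 : ℝ)|) ^ (-(1 + δ)))) := by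
        gcongr
    _ = _ := by unfold majorant; ring

/-- The multiplier bound without ordering of the two frequencies: whichever of `m`, `n - m` has the
smaller bracket supplies the majorant. -/
lemma multiplier_bound_symm {α δ : ℝ} (hα0 : 0 < α) (hδ : 0 < δ)
    (hδα : 2 * δ ≤ 1 - 2 * α) (n m : ℤ × ℤ) {φ : ℤ × ℤ ≃ ℤ × ℤ}
    (hφ : ∀ m, 1 + |((φ m).1 : ℝ)| ≤ 2 * jb2 m ∧
      1 + |((φ m).2 : ℝ)| ≤ 2 * (1 + |cross2 n m| / jb2 n)) :
    jb2 m ^ (-(2 * (1 - α))) * jb2 (n - m) ^ (-(2 * (1 - α))) *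
      (phaseSum (jb2 n) (jb2 m) (jb2 (n - m)) + (1 / jb2 m + 1 / jb2 (n - m))) ≤
      2816 * jb2 n ^ (-2 + 4 * α - 2 * min α (1 / 4) + 2 * δ) *
        (majorant δ (φ m) + majorant δ (φ (n - m))) := by
  have hnn : ∀ z, 0 ≤ majorant δ z := fun z => by unfold majorant; positivity
  have hA := one_le_jb2 n
  have hc : 0 ≤ 2816 * jb2 n ^ (-2 + 4 * α - 2 * min α (1 / 4) + 2 * δ) := by positivity
  rcases le_total (jb2 m) (jb2 (n - m)) with h | h
  · refine (multiplier_bound hα0 hδ hδα n m h hφ).trans ?_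
    gcongr
    linarith [hnn (φ (n - m))]
  · have := multiplier_bound hα0 hδ hδα n (n - m) (by simpa using h) hφ
    rw [sub_sub_cancel] at this
    have sym : phaseSum (jb2 n) (jb2 (n - m)) (jb2 m) = phaseSum (jb2 n) (jb2 m) (jb2 (n - m)) := by
      unfold phaseSum
      rw [add_right_comm (jb2 n), sub_right_comm (jb2 n), sub_add_eq_add_sub, ← sub_add_eq_add_sub]
      ring
    rw [sym, mul_comm (jb2 (n - m) ^ _), add_comm (1 / jb2 (n - m))] at this
    refine this.trans ?_
    gcongr
    linarith [hnn (φ m)]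

lemma abs_tsum_indicator_le {ι : Type*} {F g : ι → ℝ} {S : Set ι} {a : ℝ} (hg : HasSum g a)
    (h : ∀ m, |F m| ≤ g m) : |∑' m, S.indicator F m| ≤ a :=
  tsum_of_norm_bounded hg fun m => (norm_indicator_le_norm_self F m).trans (h m)

lemma hasSum_comp_equiv {ι : Type*} {f : ι → ℝ} {a : ℝ} (e : ι ≃ ι) (h : HasSum f a) :
    HasSum (fun m => f (e m)) a := by
  have key := (e.hasSum_iff (f := f)).2 h
  exact key

/-! ### Summation -/

/-- Multilinear smoothing estimate underlying Proposition 1.1: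
the gain of `min(α, 1/4)` derivatives for the second order wave object. -/
theorem stmt2 (α ε T : ℝ) (hα0 : 0 < α) (hα : α < 1 / 2) (hε : 0 < ε) (hT : 0 < T) :
    ∃ C > 0, ∀ n : ℤ × ℤ, ∀ N : ℕ, 1 ≤ N → ∀ t ∈ Set.Icc (0 : ℝ) T,
      |∑' n₁ : ℤ × ℤ,
          Set.indicator
            {m : ℤ × ℤ | m ≠ n - m ∧ m ≠ -(n - m) ∧ znorm2 m ≤ N ∧ znorm2 (n - m) ≤ N}
            (fun m => ∫ t₁ in (0 : ℝ)..t, ∫ t₂ in (0 : ℝ)..t₁,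
              Real.sin ((t - t₁) * jb2 n) * Real.sin ((t - t₂) * jb2 n) / jb2 n ^ 2
                * (sigmaW α m t₁ t₂ * sigmaW α (n - m) t₁ t₂)) n₁|
        ≤ C * jb2 n ^ (-2 - 2 * sA α + ε) := by
  obtain ⟨δ, hδ, hδε, hδα⟩ : ∃ δ : ℝ, 0 < δ ∧ 2 * δ ≤ ε ∧ 2 * δ ≤ 1 - 2 * α :=
    ⟨min ε (1 - 2 * α) / 2, by have := lt_min hε (by linarith : 0 < 1 - 2 * α); linarith,
      by linarith [min_le_left ε (1 - 2 * α)], by linarith [min_le_right ε (1 - 2 * α)]⟩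
  obtain ⟨K, hsum⟩ : Summable (majorant δ) := summable_majorant (by linarith : 1 < 1 + δ)
  have hnn : ∀ z, 0 ≤ majorant δ z := fun z => by unfold majorant; positivity
  have hK : 0 ≤ K := hsum.nonneg hnn
  obtain ⟨D, hD⟩ : ∃ D, D = (T + 1) ^ 4 * 4 * 2816 := ⟨_, rfl⟩
  have hD0 : 0 < D := by rw [hD]; positivity
  refine ⟨D * (K + K) + 1, by positivity, fun n N _ t ht => ?_⟩
  have hA := one_le_jb2 n
  have hA0 : 0 < jb2 n := by linarith
  have hpow : 0 ≤ jb2 n ^ (-2 - 2 * sA α + ε) := by positivity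
  rcases eq_or_ne n 0 with rfl | hn
  · -- for `n = 0` the condition `n₁ ≠ -n₂` empties the sum
    have : {m : ℤ × ℤ | m ≠ 0 - m ∧ m ≠ -(0 - m) ∧ znorm2 m ≤ N ∧ znorm2 (0 - m) ≤ N} = ∅ := by
      ext m; simp
    rw [this]
    simp only [Set.indicator_empty, tsum_zero, abs_zero]
    positivity
  obtain ⟨φ, hφ⟩ := exists_shear n hn
  generalize hG : jb2 n ^ (-2 - 2 * sA α + ε) = G at hpow ⊢
  have hAG : (jb2 n ^ 2)⁻¹ * jb2 n ^ (-2 + 4 * α - 2 * min α (1 / 4) + 2 * δ) ≤ G := by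
    have e : (jb2 n ^ 2)⁻¹ = jb2 n ^ (-2 : ℝ) := by
      rw [Real.rpow_neg hA0.le]; norm_num
    rw [e, ← Real.rpow_add hA0, ← hG]
    apply Real.rpow_le_rpow_of_exponent_le hA
    unfold sA; linarith
  have hs1 : HasSum (fun m => majorant δ (φ m)) K := hasSum_comp_equiv φ hsum
  have hs2 : HasSum (fun m => majorant δ (φ (n - m))) K :=
    hasSum_comp_equiv (Equiv.subLeft n) hs1
  have hs := (hs1.add hs2).mul_left (D * G)
  rw [show (D * (K + K) + 1) * G = D * G * (K + K) + G by ring]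
  refine le_trans ?_ (le_add_of_nonneg_right hpow)
  refine abs_tsum_indicator_le hs fun m => ?_
  have sb := summand_bound (α := α) ht.1 ht.2 n m (n - m)
  refine le_trans sb ?_
  have hM : 0 ≤ majorant δ (φ m) + majorant δ (φ (n - m)) := add_nonneg (hnn _) (hnn _)
  calc _ ≤ (T + 1) ^ 4 * 4 * (jb2 n ^ 2)⁻¹ *
        (2816 * jb2 n ^ (-2 + 4 * α - 2 * min α (1 / 4) + 2 * δ) *
          (majorant δ (φ m) + majorant δ (φ (n - m)))) :=
        mul_le_mul_of_nonneg_left (multiplier_bound_symm hα0 hδ hδα n m hφ) (by positivity)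
    _ = D * ((jb2 n ^ 2)⁻¹ * jb2 n ^ (-2 + 4 * α - 2 * min α (1 / 4) + 2 * δ)) *
          (majorant δ (φ m) + majorant δ (φ (n - m))) := by rw [hD]; ring
    _ ≤ _ := mul_le_mul_of_nonneg_right (mul_le_mul_of_nonneg_left hAG hD0.le) hM
end

section
/- Let 0 < α < 1/2. Then there exist constants c > 0, K > 0 and δ ∈ (0, 1], depending only on α, such that for every integer M ≥ 1 and every real t with K M^{−1/2} ≤ t ≤ δ, writing n = (M, 0) ∈ ℤ², the series ∑ (1 / (⟨n⟩² ⟨n₁⟩^{2(1−α)} ⟨n₂⟩^{2(1−α)})) ∫₀^t ∫₀^{t₁} sin((t − t₁)⟨n⟩) sin((t − t₂)⟨n⟩) cos((t₁ − t₂)⟨n₁⟩) cos((t₁ − t₂)⟨n₂⟩) t₂² dt₂ dt₁, where the sum ranges over all pairs n₁, n₂ ∈ ℤ² with n₁ + n₂ = n, n₁ ≠ n₂ and n₁ ≠ −n₂, converges absolutely and its sum is ≥ c t⁴ ⟨n⟩^{−2 − 2 s_α}. (This is the lower bound showing that the 1/4-smoothing in the multilinear estimate for the wave equation on 𝕋²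 is essentially sharp.) -/
/-- The summand in the sharpness lower bound. -/
noncomputable def waveTerm (α : ℝ) (n n₁ : ℤ × ℤ) (t : ℝ) : ℝ :=
  (1 / (jb2 n ^ 2 * jb2 n₁ ^ (2 * (1 - α)) * jb2 (n - n₁) ^ (2 * (1 - α))))
    * ∫ t₁ in (0 : ℝ)..t, ∫ t₂ in (0 : ℝ)..t₁,
        Real.sin ((t - t₁) * jb2 n) * Real.sin ((t - t₂) * jb2 n)
          * Real.cos ((t₁ - t₂) * jb2 n₁) * Real.cos ((t₁ - t₂) * jb2 (n - n₁)) * t₂ ^ 2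

open MeasureTheory

/-! ### Positivity of the time integral -/

/-- The kernel `min(t₁, t₂)²` is positive definite. With `H s = ∫_s^t h` and
`G s = ∫_0^s h(v) v² dv`, the function `-(H G) - s² H² / 2` is a primitive of `h G - s H²`, and it
vanishes at both endpoints. -/
theorem integral_triangle_eq (h : ℝ → ℝ) (hh : Continuous h) (t : ℝ) :
    ∫ t₁ in (0 : ℝ)..t, h t₁ * ∫ t₂ in (0 : ℝ)..t₁, h t₂ * t₂ ^ 2
      = ∫ s in (0 : ℝ)..t, s * (∫ v in s..t, h v) ^ 2 := by
  set G : ℝ → ℝ := fun s => ∫ v in (0 : ℝ)..s, h v * v ^ 2 with hG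
  set H : ℝ → ℝ := fun s => ∫ v in s..t, h v with hH
  have dG : ∀ s, HasDerivAt G (h s * s ^ 2) s := fun s =>
    intervalIntegral.integral_hasDerivAt_right ((by fun_prop : Continuous fun v => h v * v ^ 2).intervalIntegrable _ _)
      ((by fun_prop : Continuous fun v => h v * v ^ 2).stronglyMeasurableAtFilter _ _)
      (by fun_prop)
  have dH : ∀ s, HasDerivAt H (- h s) s := fun s =>
    intervalIntegral.integral_hasDerivAt_left (hh.intervalIntegrable _ _)
      (hh.stronglyMeasurableAtFilter _ _) hh.continuousAt
  have cG : Continuous G := continuous_iff_continuousAt.2 fun s => (dG s).continuousAt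
  have cH : Continuous H := continuous_iff_continuousAt.2 fun s => (dH s).continuousAt
  have hd : ∀ s, HasDerivAt (fun s => -(H s * G s) - s ^ 2 * H s ^ 2 / 2)
      (h s * G s - s * H s ^ 2) s := by
    intro s
    have := (((dH s).mul (dG s)).neg).sub
      ((((hasDerivAt_id s).pow 2).mul ((dH s).pow 2)).div_const 2)
    refine this.congr_deriv ?_
    simp only [id, Pi.pow_apply]
    ring
  have hi := intervalIntegral.integral_eq_sub_of_hasDerivAt (a := 0) (b := t)
    (fun s _ => hd s)
    ((by fun_prop : Continuous fun s => h s * G s - s * H s ^ 2).intervalIntegrable _ _)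
  rw [intervalIntegral.integral_sub
    ((by fun_prop : Continuous fun s => h s * G s).intervalIntegrable _ _)
    ((by fun_prop : Continuous fun s => s * H s ^ 2).intervalIntegrable _ _)] at hi
  have h1 : H t = 0 := by simp [hH]
  have h2 : G 0 = 0 := by simp [hG]
  simp only [h1, h2] at hi
  linarith

theorem integral_triangle_sum {ι : Type*} [Fintype ι] (h : ι → ℝ → ℝ)
    (hh : ∀ i, Continuous (h i)) (t : ℝ) :
    ∫ t₁ in (0 : ℝ)..t, ∫ t₂ in (0 : ℝ)..t₁, ∑ i, h i t₁ * (h i t₂ * t₂ ^ 2)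
      = ∑ i, ∫ s in (0 : ℝ)..t, s * (∫ v in s..t, h i v) ^ 2 := by
  have hc : ∀ i, Continuous fun v => h i v * v ^ 2 := fun i => by
    have := hh i
    fun_prop
  have e : ∀ t₁ : ℝ, ∫ t₂ in (0 : ℝ)..t₁, ∑ i, h i t₁ * (h i t₂ * t₂ ^ 2)
      = ∑ i, h i t₁ * ∫ t₂ in (0 : ℝ)..t₁, h i t₂ * t₂ ^ 2 := by
    intro t₁
    rw [intervalIntegral.integral_finsetSum
      fun i _ => ((hc i).const_mul _).intervalIntegrable _ _]
    simp
  simp only [e]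
  rw [intervalIntegral.integral_finsetSum]
  · exact Finset.sum_congr rfl fun i _ => integral_triangle_eq (h i) (hh i) t
  · intro i _
    exact ((hh i).mul (intervalIntegral.continuous_primitive
      (fun a b => (hc i).intervalIntegrable a b) 0)).intervalIntegrable _ _

/-- The four functions whose squares make up the time integral. The product of cosines is
`cos (u a) cos (u b) = (cos (u (a + b)) + cos (u (a - b))) / 2` with `u = t₁ - t₂`, and each cosine
splits as `cos cos + sin sin` in the variables `t - t₁`, `t - t₂`. Index `0` carries the frequency
`a + b` and the phase that resonates with the factor `sin ((t - s) N)`. -/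
noncomputable def modeFn (N a b t : ℝ) (i : Fin 4) (s : ℝ) : ℝ :=
  Real.sin ((t - s) * N) *
    ![Real.sin ((t - s) * (a + b)), Real.cos ((t - s) * (a + b)),
      Real.sin ((t - s) * (a - b)), Real.cos ((t - s) * (a - b))] i

theorem continuous_modeFn (N a b t : ℝ) (i : Fin 4) : Continuous (modeFn N a b t i) := by
  unfold modeFn
  fin_cases i <;> simp <;> fun_prop

theorem time_integral_eq (N a b t : ℝ) :
    (∫ t₁ in (0 : ℝ)..t, ∫ t₂ in (0 : ℝ)..t₁,
        Real.sin ((t - t₁) * N) * Real.sin ((t - t₂) * N)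
          * Real.cos ((t₁ - t₂) * a) * Real.cos ((t₁ - t₂) * b) * t₂ ^ 2)
      = 1 / 2 * ∑ i, ∫ s in (0 : ℝ)..t, s * (∫ v in s..t, modeFn N a b t i v) ^ 2 := by
  rw [← integral_triangle_sum _ (continuous_modeFn N a b t)]
  simp only [← intervalIntegral.integral_const_mul]
  congr 1; ext t₁; congr 1; ext t₂
  have h1 : Real.cos ((t₁ - t₂) * a) * Real.cos ((t₁ - t₂) * b)
      = 1 / 2 * (Real.cos ((t - t₂) * (a + b) - (t - t₁) * (a + b))
        + Real.cos ((t - t₂) * (a - b) - (t - t₁) * (a - b))) := by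
    rw [show (t - t₂) * (a + b) - (t - t₁) * (a + b) = (t₁ - t₂) * a + (t₁ - t₂) * b by ring,
      show (t - t₂) * (a - b) - (t - t₁) * (a - b) = (t₁ - t₂) * a - (t₁ - t₂) * b by ring,
      Real.cos_add, Real.cos_sub]
    ring
  rw [mul_assoc (Real.sin _ * Real.sin _), h1, Real.cos_sub, Real.cos_sub]
  simp [modeFn, Fin.sum_univ_four]
  ring

theorem time_integral_nonneg (N a b t : ℝ) (ht : 0 ≤ t) :
    0 ≤ ∫ t₁ in (0 : ℝ)..t, ∫ t₂ in (0 : ℝ)..t₁,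
        Real.sin ((t - t₁) * N) * Real.sin ((t - t₂) * N)
          * Real.cos ((t₁ - t₂) * a) * Real.cos ((t₁ - t₂) * b) * t₂ ^ 2 := by
  rw [time_integral_eq]
  refine mul_nonneg (by norm_num) (Finset.sum_nonneg fun i _ => ?_)
  exact intervalIntegral.integral_nonneg ht fun s hs => mul_nonneg hs.1 (sq_nonneg _)

/-! ### The resonant lower bound -/

/-- `sin ((t - v) N) sin ((t - v)(a + b))` is half the difference of a cosine of frequency
`a + b - N`, which is at least `1 / 2` on the whole interval, and a cosine of frequency `a + b + N`,
whose integral is at most `1 / N`. -/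
theorem resonant_mode_lower (N a b t s : ℝ) (ht : 0 < t) (ht1 : t ≤ 1) (hs0 : 0 ≤ s)
    (hs : s ≤ t / 2) (hab : 0 ≤ a + b) (hres : |a + b - N| ≤ 1) (hN : 8 ≤ t * N) :
    t / 16 ≤ ∫ v in s..t, modeFn N a b t 0 v := by
  have hNpos : 0 < N := by
    by_contra! h
    nlinarith
  have e : ∀ v, modeFn N a b t 0 v
      = 1 / 2 * (Real.cos ((t - v) * (a + b - N)) - Real.cos ((t - v) * (a + b + N))) := by
    intro v
    rw [mul_sub (t - v), mul_add (t - v) (a + b) N, Real.cos_sub, Real.cos_add]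
    simp [modeFn]
    ring
  simp only [e]
  rw [intervalIntegral.integral_const_mul, intervalIntegral.integral_sub
    ((by fun_prop : Continuous fun v => Real.cos ((t - v) * (a + b - N))).intervalIntegrable _ _)
    ((by fun_prop : Continuous fun v => Real.cos ((t - v) * (a + b + N))).intervalIntegrable _ _)]
  have h1 : (t - s) / 2 ≤ ∫ v in s..t, Real.cos ((t - v) * (a + b - N)) := by
    have : ∫ v in s..t, (1 / 2 : ℝ) = (t - s) / 2 := by
      simp; ring
    rw [← this]
    refine intervalIntegral.integral_mono_on (by linarith) (by simp)
      ((by fun_prop : Continuous fun v => Real.cos ((t - v) * (a + b - N))).intervalIntegrable _ _)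
      fun v hv => ?_
    have h2 : |(t - v) * (a + b - N)| ≤ 1 := by
      rw [abs_mul]
      have : |t - v| ≤ 1 := abs_le.2 ⟨by linarith [hv.1, hv.2], by linarith [hv.1, hv.2]⟩
      exact mul_le_one₀ this (abs_nonneg _) hres
    have h3 := Real.one_sub_sq_div_two_le_cos (x := (t - v) * (a + b - N))
    have h4 := (sq_le_one_iff_abs_le_one _).2 h2
    linarith
  have h2 : ∫ v in s..t, Real.cos ((t - v) * (a + b + N))
      = Real.sin ((t - s) * (a + b + N)) / (a + b + N) := by
    have hne : a + b + N ≠ 0 := by positivity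
    rw [intervalIntegral.integral_eq_sub_of_hasDerivAt
      (f := fun v => - (Real.sin ((t - v) * (a + b + N)) / (a + b + N)))]
    · simp
    · intro v _
      have := (((((hasDerivAt_id v).const_sub t).mul_const (a + b + N)).sin).div_const
        (a + b + N)).neg
      refine this.congr_deriv ?_
      simp only [id]
      field_simp
    · exact (by fun_prop : Continuous fun v => Real.cos ((t - v) * (a + b + N))).intervalIntegrable _ _
  have h3 : Real.sin ((t - s) * (a + b + N)) / (a + b + N) ≤ t / 8 := by
    rw [div_le_iff₀ (by positivity)]
    have := Real.sin_le_one ((t - s) * (a + b + N))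
    nlinarith
  rw [h2]
  linarith

/-- The resonant square contributes `s (t / 16)²` for `s ≤ t / 2`; everything else is
nonnegative. -/
theorem time_integral_resonant (N a b t : ℝ) (ht : 0 < t) (ht1 : t ≤ 1)
    (hab : 0 ≤ a + b) (hres : |a + b - N| ≤ 1) (hN : 8 ≤ t * N) :
    t ^ 4 / 4096 ≤ ∫ t₁ in (0 : ℝ)..t, ∫ t₂ in (0 : ℝ)..t₁,
        Real.sin ((t - t₁) * N) * Real.sin ((t - t₂) * N)
          * Real.cos ((t₁ - t₂) * a) * Real.cos ((t₁ - t₂) * b) * t₂ ^ 2 := by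
  rw [time_integral_eq]
  have hsum := Finset.single_le_sum
    (f := fun i => ∫ s in (0 : ℝ)..t, s * (∫ v in s..t, modeFn N a b t i v) ^ 2)
    (fun i _ => intervalIntegral.integral_nonneg ht.le
      fun s hs => mul_nonneg hs.1 (sq_nonneg _)) (Finset.mem_univ (0 : Fin 4))
  have hcont : Continuous fun s => s * (∫ v in s..t, modeFn N a b t 0 v) ^ 2 := by
    have := intervalIntegral.continuous_primitive (μ := volume)
      (fun x y => (continuous_modeFn N a b t 0).intervalIntegrable x y) t
    simp_rw [intervalIntegral.integral_symm t]
    fun_prop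
  have h1 : ∫ s in (0 : ℝ)..(t / 2), s * (t / 16) ^ 2
      ≤ ∫ s in (0 : ℝ)..(t / 2), s * (∫ v in s..t, modeFn N a b t 0 v) ^ 2 := by
    refine intervalIntegral.integral_mono_on (by linarith)
      ((by fun_prop : Continuous fun s => s * (t / 16) ^ 2).intervalIntegrable _ _)
      (hcont.intervalIntegrable _ _) fun s hs => ?_
    have := resonant_mode_lower N a b t s ht ht1 hs.1 hs.2 hab hres hN
    have h0 := hs.1
    gcongr
  have h2 : 0 ≤ ∫ s in (t / 2)..t, s * (∫ v in s..t, modeFn N a b t 0 v) ^ 2 :=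
    intervalIntegral.integral_nonneg (by linarith)
      fun s hs => mul_nonneg (by linarith [hs.1]) (sq_nonneg _)
  have h3 := intervalIntegral.integral_add_adjacent_intervals
    (hcont.intervalIntegrable (μ := volume) 0 (t / 2)) (hcont.intervalIntegrable (t / 2) t)
  have h4 : ∫ s in (0 : ℝ)..(t / 2), s * (t / 16) ^ 2 = t ^ 4 / 2048 := by
    rw [intervalIntegral.integral_mul_const, integral_id]
    ring
  linarith

theorem time_integral_abs_le (N a b t : ℝ) (ht : 0 ≤ t) (ht1 : t ≤ 1) :
    |∫ t₁ in (0 : ℝ)..t, ∫ t₂ in (0 : ℝ)..t₁,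
        Real.sin ((t - t₁) * N) * Real.sin ((t - t₂) * N)
          * Real.cos ((t₁ - t₂) * a) * Real.cos ((t₁ - t₂) * b) * t₂ ^ 2| ≤ 1 := by
  have h := intervalIntegral.norm_integral_le_of_norm_le_const (a := 0) (b := t) (C := 1)
    (f := fun t₁ => ∫ t₂ in (0 : ℝ)..t₁,
        Real.sin ((t - t₁) * N) * Real.sin ((t - t₂) * N)
          * Real.cos ((t₁ - t₂) * a) * Real.cos ((t₁ - t₂) * b) * t₂ ^ 2) ?_
  · rw [Real.norm_eq_abs, sub_zero, abs_of_nonneg ht] at h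
    linarith
  intro t₁ h₁
  rw [Set.uIoc_of_le ht] at h₁
  have h' := intervalIntegral.norm_integral_le_of_norm_le_const (a := 0) (b := t₁) (C := 1)
    (f := fun t₂ => Real.sin ((t - t₁) * N) * Real.sin ((t - t₂) * N)
          * Real.cos ((t₁ - t₂) * a) * Real.cos ((t₁ - t₂) * b) * t₂ ^ 2) ?_
  · rw [sub_zero, abs_of_nonneg h₁.1.le] at h'
    linarith [h₁.2]
  intro t₂ h₂
  rw [Set.uIoc_of_le h₁.1.le] at h₂
  have h5 : |t₂| ≤ 1 := abs_le.2 ⟨by linarith [h₂.1], by linarith [h₂.2, h₁.2]⟩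
  simp only [Real.norm_eq_abs, abs_mul, abs_pow]
  have := Real.abs_sin_le_one ((t - t₁) * N)
  have := Real.abs_sin_le_one ((t - t₂) * N)
  have := Real.abs_cos_le_one ((t₁ - t₂) * a)
  have := Real.abs_cos_le_one ((t₁ - t₂) * b)
  calc _ ≤ (1 : ℝ) * 1 * 1 * 1 * 1 ^ 2 := by gcongr
    _ = 1 := by norm_num

/-! ### Bounds for the individual summands -/

theorem jb2_one_le (m : ℤ × ℤ) : 1 ≤ jb2 m := by
  unfold jb2
  rw [Real.one_le_sqrt]
  nlinarith [sq_nonneg (m.1 : ℝ), sq_nonneg (m.2 : ℝ)]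

/-- Only `‖m‖_∞ ≤ ⟨m⟩` is used; the origin is set aside because `‖0‖ ^ (-k)` takes the junk
value `0`. -/
theorem summable_jb2_rpow {k : ℝ} (hk : 2 < k) : Summable fun m : ℤ × ℤ => jb2 m ^ (-k) := by
  have h := (finTwoArrowEquiv ℤ).symm.summable_iff.2
    (EisensteinSeries.summable_one_div_norm_rpow hk)
  refine Summable.of_norm_bounded_eventually h ?_
  have hf : ({0} : Set (ℤ × ℤ)).Finite := Set.finite_singleton 0
  filter_upwards [hf.compl_mem_cofinite] with m hm
  have hm0 : m ≠ 0 := hm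
  rw [Real.norm_of_nonneg (Real.rpow_nonneg (by linarith [jb2_one_le m]) _)]
  have hpos : 0 < ‖(finTwoArrowEquiv ℤ).symm m‖ := by
    rw [norm_pos_iff]
    intro h0
    apply hm0
    have h1 := congrFun h0 0
    have h2 := congrFun h0 1
    ext
    · simpa using h1
    · simpa using h2
  refine Real.rpow_le_rpow_of_nonpos hpos ?_ (by linarith)
  refine (pi_norm_le_iff_of_nonneg (by linarith [jb2_one_le m])).2 fun i => ?_
  unfold jb2
  fin_cases i
  · simp only [Int.norm_eq_abs]
    refine Real.abs_le_sqrt ?_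
    simp
    nlinarith [sq_nonneg (m.2 : ℝ)]
  · simp only [Int.norm_eq_abs]
    refine Real.abs_le_sqrt ?_
    simp
    nlinarith [sq_nonneg (m.1 : ℝ)]

theorem waveTerm_nonneg (α : ℝ) (n m : ℤ × ℤ) (t : ℝ) (ht : 0 ≤ t) : 0 ≤ waveTerm α n m t := by
  unfold waveTerm
  have h1 := jb2_one_le n
  have h2 := jb2_one_le m
  have h3 := jb2_one_le (n - m)
  exact mul_nonneg (by positivity) (time_integral_nonneg _ _ _ _ ht)

/-- A summable majorant: the time integral is at most `1`, and
`⟨m⟩^{-p} ⟨n - m⟩^{-p} ≤ ⟨m⟩^{-2p} + ⟨n - m⟩^{-2p}` with `2p = 4(1 - α) > 2`. -/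
theorem waveTerm_le (α : ℝ) (n m : ℤ × ℤ) (t : ℝ) (ht : 0 ≤ t) (ht1 : t ≤ 1) :
    waveTerm α n m t ≤ jb2 m ^ (-(4 * (1 - α))) + jb2 (n - m) ^ (-(4 * (1 - α))) := by
  unfold waveTerm
  have h1 := jb2_one_le n
  have h2 := jb2_one_le m
  have h3 := jb2_one_le (n - m)
  have hI := (abs_le.1 (time_integral_abs_le (jb2 n) (jb2 m) (jb2 (n - m)) t ht ht1)).2
  have hx : jb2 m ^ (-(4 * (1 - α))) = (jb2 m ^ (2 * (1 - α)))⁻¹ ^ 2 := by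
    rw [← Real.rpow_neg (by linarith), ← Real.rpow_natCast, ← Real.rpow_mul (by linarith)]
    congr 1; push_cast; ring
  have hy : jb2 (n - m) ^ (-(4 * (1 - α))) = (jb2 (n - m) ^ (2 * (1 - α)))⁻¹ ^ 2 := by
    rw [← Real.rpow_neg (by linarith), ← Real.rpow_natCast, ← Real.rpow_mul (by linarith)]
    congr 1; push_cast; ring
  have hx0 : 0 ≤ (jb2 m ^ (2 * (1 - α)))⁻¹ := by positivity
  have hy0 : 0 ≤ (jb2 (n - m) ^ (2 * (1 - α)))⁻¹ := by positivity
  have hN : (jb2 n ^ 2)⁻¹ ≤ 1 := inv_le_one_of_one_le₀ (one_le_pow₀ h1)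
  have hN0 : 0 ≤ (jb2 n ^ 2)⁻¹ := by positivity
  rw [hx, hy, one_div, mul_inv, mul_inv]
  set X := (jb2 m ^ (2 * (1 - α)))⁻¹
  set Y := (jb2 (n - m) ^ (2 * (1 - α)))⁻¹
  calc _ ≤ (1 * X * Y) * 1 :=
        mul_le_mul (by gcongr) hI (time_integral_nonneg _ _ _ _ ht) (by positivity)
    _ ≤ X ^ 2 + Y ^ 2 := by nlinarith [sq_nonneg (X - Y), sq_nonneg (X + Y)]

theorem summable_waveTerm (α : ℝ) (hα : α < 1 / 2) (n : ℤ × ℤ) (t : ℝ) (ht : 0 ≤ t)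
    (ht1 : t ≤ 1) : Summable fun m => waveTerm α n m t := by
  have h := summable_jb2_rpow (k := 4 * (1 - α)) (by linarith)
  exact Summable.of_nonneg_of_le (fun m => waveTerm_nonneg α n m t ht)
    (fun m => waveTerm_le α n m t ht ht1) (h.add ((Equiv.subLeft n).summable_iff.2 h))

theorem waveTerm_resonant (α : ℝ) (n m : ℤ × ℤ) (t : ℝ) (ht : 0 < t) (ht1 : t ≤ 1)
    (hres : |jb2 m + jb2 (n - m) - jb2 n| ≤ 1) (hN : 8 ≤ t * jb2 n) :
    1 / (jb2 n ^ 2 * jb2 m ^ (2 * (1 - α)) * jb2 (n - m) ^ (2 * (1 - α))) * (t ^ 4 / 4096)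
      ≤ waveTerm α n m t := by
  unfold waveTerm
  have h1 := jb2_one_le n
  have h2 := jb2_one_le m
  have h3 := jb2_one_le (n - m)
  have := time_integral_resonant (jb2 n) (jb2 m) (jb2 (n - m)) t ht ht1 (by linarith) hres hN
  gcongr

/-- At a resonance `⟨m⟩ + ⟨n - m⟩ ≤ ⟨n⟩ + 1`, and both brackets on the left are at least `1`, so
both are at most `⟨n⟩`. -/
theorem waveTerm_resonant_uniform (α : ℝ) (hα : α < 1 / 2) (n m : ℤ × ℤ) (t : ℝ) (ht : 0 < t)
    (ht1 : t ≤ 1) (hres : |jb2 m + jb2 (n - m) - jb2 n| ≤ 1) (hN : 8 ≤ t * jb2 n) :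
    jb2 n ^ (-2 - 4 * (1 - α)) * (t ^ 4 / 4096) ≤ waveTerm α n m t := by
  refine le_trans ?_ (waveTerm_resonant α n m t ht ht1 hres hN)
  have h1 := jb2_one_le n
  have h2 := jb2_one_le m
  have h3 := jb2_one_le (n - m)
  have h4 := (abs_le.1 hres).2
  have e : jb2 n ^ (-2 - 4 * (1 - α))
      = 1 / (jb2 n ^ 2 * jb2 n ^ (2 * (1 - α)) * jb2 n ^ (2 * (1 - α))) := by
    rw [← Real.rpow_natCast, ← Real.rpow_add (by linarith), ← Real.rpow_add (by linarith),
      one_div, ← Real.rpow_neg (by linarith)]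
    congr 1; push_cast; ring
  have hp : 0 ≤ 2 * (1 - α) := by linarith
  rw [e]
  have h5 : jb2 m ≤ jb2 n := by linarith
  have h6 : jb2 (n - m) ≤ jb2 n := by linarith
  gcongr

/-- Points `(x, y)` with `x` comparable to `M` and `y² ≲ M` are resonant: there
`⟨(x, y)⟩ = x + O(1)` and `⟨(M - x, -y)⟩ = M - x + O(1)`, with small implied constants. -/
theorem resonance_of_parabola (M x y : ℕ) (hM : 256 ≤ M) (hx : (M : ℝ) / 16 ≤ x)
    (hx' : 4 * (x : ℝ) ≤ M) (hy : 64 * (y : ℝ) ^ 2 ≤ M) :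
    |jb2 ((x : ℤ), (y : ℤ)) + jb2 (((M : ℤ), 0) - ((x : ℤ), (y : ℤ))) - jb2 ((M : ℤ), 0)| ≤ 1 := by
  have hMr : (256 : ℝ) ≤ M := by exact_mod_cast hM
  have hM0 : (0 : ℝ) < M := by linarith
  have hx0 : (0 : ℝ) < x := by linarith
  have hN1 : (M : ℝ) ≤ jb2 ((M : ℤ), 0) := by
    unfold jb2; apply Real.le_sqrt_of_sq_le; simp
  have hN2 : jb2 ((M : ℤ), 0) ≤ M + 1 := by
    unfold jb2; apply Real.sqrt_le_iff.2; constructor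
    · linarith
    · simp; nlinarith
  have ha1 : (x : ℝ) ≤ jb2 ((x : ℤ), (y : ℤ)) := by
    unfold jb2; apply Real.le_sqrt_of_sq_le; simp; nlinarith [sq_nonneg (y : ℝ)]
  have hb1 : (M : ℝ) - x ≤ jb2 (((M : ℤ), 0) - ((x : ℤ), (y : ℤ))) := by
    unfold jb2; apply Real.le_sqrt_of_sq_le; simp; nlinarith [sq_nonneg (y : ℝ)]
  have ha2 : jb2 ((x : ℤ), (y : ℤ)) ≤ x + 3 / 4 := by
    unfold jb2; apply Real.sqrt_le_iff.2; constructor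
    · linarith
    · simp; nlinarith [sq_nonneg (y : ℝ)]
  have hb2 : jb2 (((M : ℤ), 0) - ((x : ℤ), (y : ℤ))) ≤ M - x + 1 / 4 := by
    unfold jb2; apply Real.sqrt_le_iff.2; constructor
    · linarith
    · simp; nlinarith [sq_nonneg (y : ℝ)]
  rw [abs_le]
  constructor <;> linarith

/-! ### Lower bound for the sum -/

/-- Sharpness of the 1/4-smoothing for the wave equation on 𝕋²: lower bound. -/
theorem stmt3 (α : ℝ) (hα0 : 0 < α) (hα : α < 1 / 2) :
    ∃ c > 0, ∃ K > 0, ∃ δ : ℝ, 0 < δ ∧ δ ≤ 1 ∧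
      ∀ M : ℕ, 1 ≤ M → ∀ t : ℝ,
        K * (M : ℝ) ^ (-(1 : ℝ) / 2) ≤ t → t ≤ δ →
        Summable (fun n₁ : ℤ × ℤ =>
          Set.indicator
            {m : ℤ × ℤ | m ≠ ((M : ℤ), 0) - m ∧ m ≠ -(((M : ℤ), 0) - m)}
            (fun m => |waveTerm α ((M : ℤ), 0) m t|) n₁) ∧
        c * t ^ 4 * jb2 ((M : ℤ), 0) ^ (-2 - 2 * sA α) ≤
          ∑' n₁ : ℤ × ℤ,
            Set.indicator
              {m : ℤ × ℤ | m ≠ ((M : ℤ), 0) - m ∧ m ≠ -(((M : ℤ), 0) - m)}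
              (fun m => waveTerm α ((M : ℤ), 0) m t) n₁ := by
  refine ⟨1 / 4096 / 2048, by norm_num, 16, by norm_num, 1, one_pos, le_rfl, ?_⟩
  intro M hM1 t htK ht1
  have hM0 : (0 : ℝ) < M := by exact_mod_cast hM1
  have hs0 : 0 < √(M : ℝ) := Real.sqrt_pos.2 hM0
  have hss : √(M : ℝ) * √(M : ℝ) = M := Real.mul_self_sqrt hM0.le
  have hpow : (M : ℝ) ^ (-(1 : ℝ) / 2) = 1 / √(M : ℝ) := by
    rw [neg_div, Real.rpow_neg hM0.le, ← Real.sqrt_eq_rpow, one_div]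
  have hts : 16 ≤ t * √(M : ℝ) := by
    rw [hpow, mul_one_div, div_le_iff₀ hs0] at htK
    exact htK
  have ht : 0 < t := by
    by_contra! h
    nlinarith
  have hs16 : 16 ≤ √(M : ℝ) := by nlinarith
  have hMr : (256 : ℝ) ≤ M := by nlinarith
  have hM256 : 256 ≤ M := by exact_mod_cast hMr
  set n : ℤ × ℤ := ((M : ℤ), 0) with hn
  have hN1 : (M : ℝ) ≤ jb2 n := by
    unfold jb2; apply Real.le_sqrt_of_sq_le; simp [hn]
  have hN2 : jb2 n ≤ 2 * M := by
    unfold jb2; apply Real.sqrt_le_iff.2; constructor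
    · linarith
    · simp [hn]; nlinarith
  have hN0 : 0 < jb2 n := by linarith
  have htN : 8 ≤ t * jb2 n := by
    have : t * √(M : ℝ) ≤ t * jb2 n := by gcongr; nlinarith
    linarith
  set S : Set (ℤ × ℤ) := {m : ℤ × ℤ | m ≠ n - m ∧ m ≠ -(n - m)} with hS
  have hsum := summable_waveTerm α hα n t ht.le ht1
  have hsumS := hsum.indicator S
  refine ⟨?_, ?_⟩
  · refine hsumS.congr fun m => ?_
    simp only [abs_of_nonneg (waveTerm_nonneg α n _ t ht.le)]
  have hnn : ∀ m, 0 ≤ S.indicator (fun m => waveTerm α n m t) m := fun m =>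
    Set.indicator_nonneg (fun m _ => waveTerm_nonneg α n m t ht.le) m
  rcases le_total α (1 / 4) with h4 | h4
  -- For `α ≤ 1/4` the single frequency `n₁ = 0`, for which `⟨n₁⟩ + ⟨n₂⟩ - ⟨n⟩ = 1`, suffices.
  · have hmem : (0 : ℤ × ℤ) ∈ S := by
      simp [hS, hn, Prod.ext_iff]
      omega
    have h0 : jb2 0 = 1 := by simp [jb2]
    have hr := waveTerm_resonant α n 0 t ht ht1 (by simp [h0]) htN
    refine le_trans ?_ (hsumS.le_tsum 0 fun m _ => hnn m)
    rw [Set.indicator_of_mem hmem]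
    refine le_trans ?_ hr
    have e : 1 / (jb2 n ^ 2 * jb2 0 ^ (2 * (1 - α)) * jb2 (n - 0) ^ (2 * (1 - α)))
        = jb2 n ^ (-2 - 2 * sA α) := by
      rw [h0, Real.one_rpow, mul_one, sub_zero, ← Real.rpow_natCast, ← Real.rpow_add hN0,
        one_div, ← Real.rpow_neg hN0.le, sA, min_eq_left h4]
      congr 1; push_cast; ring
    rw [e]
    have : 0 ≤ jb2 n ^ (-2 - 2 * sA α) * t ^ 4 := by positivity
    linarith
  -- For `α ≥ 1/4`, sum over a `q × r` box with `q ~ M` and `r ~ √M` of resonant frequencies;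
  -- its first coordinates stay below `M / 2`, which avoids the excluded point `n₁ = n₂`.
  · set q : ℕ := ⌊(M : ℝ) / 8⌋₊ with hq
    set r : ℕ := ⌊√(M : ℝ) / 8⌋₊ with hr
    have hq1 : (q : ℝ) ≤ M / 8 := Nat.floor_le (by positivity)
    have hq2 : (M : ℝ) / 16 ≤ q := by
      have := Nat.lt_floor_add_one ((M : ℝ) / 8)
      rw [← hq] at this
      linarith
    have hr1 : (r : ℝ) ≤ √(M : ℝ) / 8 := Nat.floor_le (by positivity)
    have hr2 : √(M : ℝ) / 16 ≤ r := by
      have := Nat.lt_floor_add_one (√(M : ℝ) / 8)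
      rw [← hr] at this
      linarith
    set f : ℕ × ℕ → ℤ × ℤ := fun p => ((p.1 : ℤ), (p.2 : ℤ)) with hf
    have hfi : Function.Injective f := by
      intro p p' h
      simpa [hf, Prod.ext_iff] using h
    set P : Finset (ℕ × ℕ) := Finset.Ico q (2 * q) ×ˢ Finset.range r with hP
    have hcard : ((P.card : ℕ) : ℝ) = q * r := by
      simp [hP, Finset.card_product, two_mul]
    have hterm : ∀ p ∈ P, jb2 n ^ (-2 - 4 * (1 - α)) * (t ^ 4 / 4096)
        ≤ S.indicator (fun m => waveTerm α n m t) (f p) := by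
      rintro ⟨x, y⟩ hp
      simp only [hP, Finset.mem_product, Finset.mem_Ico, Finset.mem_range] at hp
      have hx1 : (q : ℝ) ≤ x := by exact_mod_cast hp.1.1
      have hx2 : (x : ℝ) ≤ 2 * q := by exact_mod_cast hp.1.2.le
      have hy1 : (y : ℝ) ≤ r := by exact_mod_cast hp.2.le
      have hy : 64 * (y : ℝ) ^ 2 ≤ M := by
        have h8 : 8 * (y : ℝ) ≤ √(M : ℝ) := by linarith
        nlinarith [(Nat.cast_nonneg y : (0 : ℝ) ≤ y)]
      have h4x : 4 * x ≤ M := by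
        have : 4 * (x : ℝ) ≤ M := by linarith
        exact_mod_cast this
      have hmem : f (x, y) ∈ S := by
        simp only [hS, hn, hf, Set.mem_ofPred_eq, Ne, Prod.ext_iff, Prod.fst_sub, Prod.snd_sub,
          Prod.fst_neg, Prod.snd_neg]
        omega
      rw [Set.indicator_of_mem hmem]
      exact waveTerm_resonant_uniform α hα n _ t ht ht1
        (resonance_of_parabola M x y hM256 (by linarith) (by linarith) hy) htN
    have hle := hsumS.sum_le_tsum (P.map ⟨f, hfi⟩) fun m _ => hnn m
    refine le_trans ?_ hle
    rw [Finset.sum_map]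
    refine le_trans ?_ (Finset.card_nsmul_le_sum P _ _ hterm)
    rw [nsmul_eq_mul, hcard]
    have e : jb2 n ^ (-2 - 2 * sA α)
        = jb2 n ^ (-2 - 4 * (1 - α)) * (jb2 n * √(jb2 n)) := by
      rw [Real.sqrt_eq_rpow, ← Real.rpow_one_add' hN0.le (by norm_num), ← Real.rpow_add hN0, sA,
        min_eq_right h4]
      congr 1; ring
    have hsq : √(jb2 n) ≤ 2 * √(M : ℝ) := by
      apply Real.sqrt_le_iff.2; constructor
      · positivity
      · nlinarith
    have hNqr : jb2 n * √(jb2 n) ≤ 1024 * (q * r) := by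
      calc jb2 n * √(jb2 n) ≤ (2 * M) * (2 * √(M : ℝ)) := by gcongr
        _ = 1024 * ((M / 16) * (√(M : ℝ) / 16)) := by ring
        _ ≤ _ := by gcongr
    rw [e]
    calc 1 / 4096 / 2048 * t ^ 4 * (jb2 n ^ (-2 - 4 * (1 - α)) * (jb2 n * √(jb2 n)))
        ≤ 1 / 4096 / 2048 * t ^ 4 * (jb2 n ^ (-2 - 4 * (1 - α)) * (1024 * (q * r))) := by gcongr
      _ = (q * r * (jb2 n ^ (-2 - 4 * (1 - α)) * (t ^ 4 / 4096))) / 2 := by ring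
      _ ≤ _ := half_le_self (by positivity)
end
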